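/- arXiv:math/0204346 — 2 statements merged into one kernel-verified Lean document; each statement's English description precedes it below -/
import Mathlib

section
/- There exists a unique X ∈ ℚ[[d₁,d₂,d₃]] such that (1 + d₁d₃·X)² · φ(d₁+d₂) · φ(d₂+d₃) = φ(d₂) · φ(d₁+d₂+d₃). For this X, let F ∈ ℚ[[d₁,d₂,d₃]] be obtained by substituting u = d₁d₃·X and v = −d₂(d₁+d₂+d₃)·X into Ψ₀ (both substituted series have zero constant term, so the substitution is defined) and multiplying the result by X. Then Cosh(F) + d₁d₃·Sinh(F) = 1 + d₁d₃·X; in particular (Cosh(F) + d₁d₃·Sinh(F))² · φ(d₁+d₂) · φ(d₂+d₃) = φ(d₂) · φ(d₁+d₂+d₃), i.e. F solves the equation of Theorem 1. -/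
noncomputable section

abbrev R3 := MvPowerSeries (Fin 3) ℚ

def d (i : Fin 3) : R3 := MvPowerSeries.X i

def mdeg {n : ℕ} (m : Fin n →₀ ℕ) : ℕ := m.sum fun _ k => k

/-- K = −d₁d₂d₃(d₁+d₂+d₃) -/
def K3 : R3 := -(d 0 * d 1 * d 2 * (d 0 + d 1 + d 2))

/-- Cosh(F) = Σ F^{2n} K^n/(2n)! (coefficientwise finite sum) -/
def Cosh (F : R3) : R3 := fun m => ∑ n ∈ Finset.range (mdeg m + 1),
  MvPowerSeries.coeff (R := ℚ) m ((((2*n).factorial : ℚ))⁻¹ • (F ^ (2*n) * K3 ^ n))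

def Sinh (F : R3) : R3 := fun m => ∑ n ∈ Finset.range (mdeg m + 1),
  MvPowerSeries.coeff (R := ℚ) m ((((2*n+1).factorial : ℚ))⁻¹ • (F ^ (2*n+1) * K3 ^ n))

/-- φ(g) = Σ g^{2n}/(4^n (2n+1)!) for g with zero constant term -/
def phi3 (g : R3) : R3 := fun m => ∑ n ∈ Finset.range (mdeg m + 1),
  MvPowerSeries.coeff (R := ℚ) m ((((4:ℚ)^n * (2*n+1).factorial)⁻¹) • g ^ (2*n))

/-- generalized binomial coefficient C(−1/2, n) = (−1)ⁿ (2n choose n)/4ⁿ -/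
def cb (n : ℕ) : ℚ := (-1)^n * (Nat.choose (2*n) n : ℚ) / 4^n

/-- Ψ₀(a,b) for a, b of positive order: the substituted double series
Σ_{p,q} C(−1/2,p) C(−1/2,q) a^p b^q (a+2)^{p+q+1} / (2(p+q+1)),
implemented as a coefficientwise finite sum. -/
def PsiSub (a b : R3) : R3 := fun m =>
  ∑ p ∈ Finset.range (mdeg m + 1), ∑ q ∈ Finset.range (mdeg m + 1),
    MvPowerSeries.coeff (R := ℚ) m ((cb p * cb q / (2*(p+q+1))) • (a ^ p * b ^ q * (a + 2) ^ (p+q+1)))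

/-- F = X·Ψ₀(d₁d₃X, −d₂(d₁+d₂+d₃)X) -/
def FofX (X : R3) : R3 := X * PsiSub (d 0 * d 2 * X) (-(d 1) * (d 0 + d 1 + d 2) * X)

open MvPowerSeries

section Jets

theorem mdeg_eq_degree {n : ℕ} (m : Fin n →₀ ℕ) : mdeg m = m.degree := rfl

/-- The ideal of power series of order at least `N`. -/
def ordIdeal (N : ℕ) : Ideal R3 where
  carrier := {f | (N : ℕ∞) ≤ f.order}
  add_mem' hf hg := (le_min hf hg).trans min_order_le_add
  zero_mem' := by simp
  smul_mem' _ _ hf := (le_add_left hf).trans le_order_mul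

theorem mem_ordIdeal {N : ℕ} {f : R3} : f ∈ ordIdeal N ↔ (N : ℕ∞) ≤ f.order := Iff.rfl

theorem mem_ordIdeal_iff_coeff {N : ℕ} {f : R3} :
    f ∈ ordIdeal N ↔ ∀ m, mdeg m < N → coeff m f = 0 := by
  refine ⟨fun h m hm => coeff_of_lt_order (lt_of_lt_of_le ?_ h), fun h => nat_le_order h⟩
  exact_mod_cast hm

theorem ordIdeal_anti {M N : ℕ} (h : N ≤ M) {f : R3} (hf : f ∈ ordIdeal M) : f ∈ ordIdeal N :=
  le_trans (by exact_mod_cast h) (mem_ordIdeal.1 hf)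

theorem mul_mem_ordIdeal {M N : ℕ} {f g : R3} (hf : f ∈ ordIdeal M) (hg : g ∈ ordIdeal N) :
    f * g ∈ ordIdeal (M + N) := by
  rw [mem_ordIdeal, Nat.cast_add]
  exact (add_le_add hf hg).trans le_order_mul

theorem mem_ordIdeal_one {f : R3} : f ∈ ordIdeal 1 ↔ constantCoeff f = 0 := by
  rw [mem_ordIdeal, Nat.cast_one, one_le_order_iff_constCoeff_eq_zero]

theorem pow_mem_ordIdeal {y : R3} (hy : constantCoeff y = 0) (n : ℕ) : y ^ n ∈ ordIdeal n :=
  le_order_pow_of_constantCoeff_eq_zero n hy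

theorem smul_mem_ordIdeal {N : ℕ} (c : ℚ) {f : R3} (hf : f ∈ ordIdeal N) :
    c • f ∈ ordIdeal N :=
  le_trans (mem_ordIdeal.1 hf) le_order_smul

/-- Reduction modulo power series of order at least `N`. -/
def jet (N : ℕ) : R3 →ₐ[ℚ] R3 ⧸ ordIdeal N := Ideal.Quotient.mkₐ ℚ (ordIdeal N)

theorem jet_eq_jet {N : ℕ} {f g : R3} : jet N f = jet N g ↔ f - g ∈ ordIdeal N :=
  Ideal.Quotient.eq

theorem jet_eq_zero {N : ℕ} {f : R3} : jet N f = 0 ↔ f ∈ ordIdeal N :=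
  Ideal.Quotient.eq_zero_iff_mem

theorem jet_eq_jet_iff_coeff {N : ℕ} {f g : R3} :
    jet N f = jet N g ↔ ∀ m, mdeg m < N → coeff m f = coeff m g := by
  simp only [jet_eq_jet, mem_ordIdeal_iff_coeff, map_sub, sub_eq_zero]

theorem eq_of_jet {f g : R3} (h : ∀ N, jet N f = jet N g) : f = g :=
  MvPowerSeries.ext fun m => jet_eq_jet_iff_coeff.1 (h (mdeg m + 1)) m (Nat.lt_succ_self _)

theorem jet_of_le {M N : ℕ} (hNM : N ≤ M) {f g : R3} (h : jet M f = jet M g) :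
    jet N f = jet N g :=
  jet_eq_jet.2 (ordIdeal_anti hNM (jet_eq_jet.1 h))

theorem jet_diagonal_sum (t : ℕ → R3) (ht : ∀ n, t n ∈ ordIdeal n) (N : ℕ) :
    jet N (fun m => ∑ n ∈ Finset.range (mdeg m + 1), coeff m (t n) : R3)
      = jet N (∑ n ∈ Finset.range N, t n) := by
  refine jet_eq_jet_iff_coeff.2 fun m hm => ?_
  rw [map_sum]
  refine Finset.sum_subset (Finset.range_mono hm) fun n _ hn => ?_
  exact mem_ordIdeal_iff_coeff.1 (ht n) m (by simpa using hn)

theorem jet_diagonal_sum₂ (t : ℕ → ℕ → R3) (ht : ∀ p q, t p q ∈ ordIdeal (p + q)) (N : ℕ) :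
    jet N (fun m => ∑ p ∈ Finset.range (mdeg m + 1), ∑ q ∈ Finset.range (mdeg m + 1),
        coeff m (t p q) : R3)
      = jet N (∑ p ∈ Finset.range N, ∑ q ∈ Finset.range N, t p q) := by
  refine jet_eq_jet_iff_coeff.2 fun m hm => ?_
  simp only [map_sum]
  have h0 : ∀ p q, mdeg m < p + q → coeff m (t p q) = 0 := fun p q h =>
    mem_ordIdeal_iff_coeff.1 (ht p q) m h
  have hsub := Finset.range_mono (Nat.succ_le_of_lt hm)
  refine (Finset.sum_congr rfl fun p _ => Finset.sum_subset hsub fun q _ hq => ?_).trans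
    (Finset.sum_subset hsub fun p _ hp => Finset.sum_eq_zero fun q _ => ?_)
  · exact h0 p q (by simp at hq; omega)
  · exact h0 p q (by simp at hp; omega)

end Jets

section Series

/-- The value `∑ c n * y ^ n` of a univariate series at a power series without constant term. -/
def ser (c : ℕ → ℚ) (y : R3) : R3 :=
  fun m => ∑ n ∈ Finset.range (mdeg m + 1), coeff m (c n • y ^ n)

theorem jet_ser (c : ℕ → ℚ) {y : R3} (hy : constantCoeff y = 0) (N : ℕ) :
    jet N (ser c y) = jet N (∑ n ∈ Finset.range N, c n • y ^ n) :=
  jet_diagonal_sum _ (fun n => smul_mem_ordIdeal _ (pow_mem_ordIdeal hy n)) N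

theorem constantCoeff_ser (c : ℕ → ℚ) (y : R3) : constantCoeff (ser c y) = c 0 := by
  rw [← coeff_zero_eq_constantCoeff_apply]
  change ∑ n ∈ Finset.range (mdeg (0 : Fin 3 →₀ ℕ) + 1), coeff 0 (c n • y ^ n) = c 0
  simp [mdeg]

theorem ser_add (c e : ℕ → ℚ) (y : R3) :
    ser c y + ser e y = ser (fun n => c n + e n) y := by
  funext m
  change (ser c y m + ser e y m : ℚ) = _
  simp only [ser, ← Finset.sum_add_distrib, add_smul, map_add]

theorem smul_ser (a : ℚ) (c : ℕ → ℚ) (y : R3) :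
    a • ser c y = ser (fun n => a * c n) y := by
  funext m
  change (a • ser c y m : ℚ) = _
  simp only [ser, Finset.smul_sum, mul_smul, map_smul]

theorem mul_ser_succ (c : ℕ → ℚ) {y : R3} (hy : constantCoeff y = 0) :
    y * ser (fun n => (n + 1) * c (n + 1)) y = ser (fun n => n * c n) y := by
  refine eq_of_jet fun N => ?_
  rw [map_mul, jet_ser _ hy, jet_of_le N.le_succ (jet_ser _ hy (N + 1)), ← map_mul,
    Finset.sum_range_succ', Finset.mul_sum]
  congr 1
  simp [pow_succ']

/-- The Euler derivation `∑ dᵢ ∂/∂dᵢ`. -/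
def euler : Derivation ℚ R3 R3 :=
  (X 0 : R3) • pderiv ℚ 0 + (X 1 : R3) • pderiv ℚ 1 + (X 2 : R3) • pderiv ℚ 2

theorem coeff_euler (f : R3) (m : Fin 3 →₀ ℕ) : coeff m (euler f) = mdeg m * coeff m f := by
  have key : ∀ i, coeff m ((X i : R3) * pderiv ℚ i f) = m i * coeff m f := by
    intro i
    by_cases h : m i = 0
    · rw [X_dvd_iff.1 (Dvd.intro _ rfl) m h, h]
      simp
    · obtain ⟨k, rfl⟩ : ∃ k, m = Finsupp.single i 1 + k :=
        le_iff_exists_add.1 (by simpa using Nat.one_le_iff_ne_zero.2 h)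
      rw [X, coeff_add_monomial_mul, coeff_pderiv, add_comm k]
      simp
      ring
  have hm : mdeg m = ∑ i, m i := by rw [mdeg, Finsupp.sum_fintype _ _ fun _ => rfl]
  simp only [euler, Derivation.add_apply, Derivation.smul_apply, smul_eq_mul,
    map_add, key, hm, Fin.sum_univ_three, Nat.cast_add, add_mul]

theorem euler_X (i : Fin 3) : euler (X i : R3) = X i := by
  classical
  ext m
  rw [coeff_euler, coeff_X]
  split_ifs with h
  · simp [h, mdeg]
  · simp

theorem jet_euler {N : ℕ} {f g : R3} (h : jet N f = jet N g) :
    jet N (euler f) = jet N (euler g) := by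
  rw [jet_eq_jet_iff_coeff] at h ⊢
  intro m hm
  rw [coeff_euler, coeff_euler, h m hm]

theorem eq_C_of_euler_eq_zero {f : R3} (h : euler f = 0) : f = C (constantCoeff f) := by
  classical
  ext m
  rw [coeff_C]
  split_ifs with hm
  · rw [hm, coeff_zero_eq_constantCoeff_apply]
  · have := coeff_euler f m
    rw [h, map_zero, zero_eq_mul] at this
    refine this.resolve_left ?_
    rw [mdeg_eq_degree]
    exact_mod_cast mt (Finsupp.degree_eq_zero_iff m).1 hm

theorem euler_ser (c : ℕ → ℚ) {y : R3} (hy : constantCoeff y = 0) :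
    euler (ser c y) = ser (fun n => (n + 1) * c (n + 1)) y * euler y := by
  refine eq_of_jet fun N => ?_
  rw [jet_euler (jet_of_le N.le_succ (jet_ser c hy (N + 1))), map_mul, jet_ser _ hy, ← map_mul,
    Finset.sum_range_succ', Finset.sum_mul]
  refine congrArg (jet N) ?_
  rw [map_add, pow_zero, Derivation.map_smul, Derivation.map_one_eq_zero, smul_zero, add_zero,
    map_sum]
  refine Finset.sum_congr rfl fun n _ => ?_
  rw [Derivation.map_smul, Derivation.leibniz_pow, Nat.add_sub_cancel, ← Nat.cast_smul_eq_nsmul ℚ, smul_smul, smul_eq_mul, smul_mul_assoc]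
  push_cast
  rw [mul_comm (c _)]

theorem X_dvd_ser_sub_ser (c : ℕ → ℚ) {i : Fin 3} {y z : R3} (hy : constantCoeff y = 0)
    (hz : constantCoeff z = 0) (h : (X i : R3) ∣ y - z) : (X i : R3) ∣ ser c y - ser c z := by
  refine X_dvd_iff.2 fun m hm => ?_
  have hj : jet (mdeg m + 1) (ser c y - ser c z)
      = jet (mdeg m + 1) (∑ n ∈ Finset.range (mdeg m + 1), c n • (y ^ n - z ^ n)) := by
    rw [map_sub, jet_ser c hy, jet_ser c hz, ← map_sub, ← Finset.sum_sub_distrib]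
    simp only [smul_sub]
  rw [jet_eq_jet_iff_coeff.1 hj m (Nat.lt_succ_self _)]
  refine X_dvd_iff.1 (Finset.dvd_sum fun n _ => ?_) m hm
  rw [smul_eq_C_mul]
  exact (h.trans (sub_dvd_pow_sub_pow y z n)).mul_left _

end Series

section Binomial

theorem two_mul_eq_smul (f : R3) : 2 * f = (2 : ℚ) • f := by rw [two_mul, two_smul]

theorem two_mul_left_cancel {f g : R3} (h : 2 * f = 2 * g) : f = g := by
  rw [two_mul_eq_smul, two_mul_eq_smul] at h
  exact smul_right_injective R3 (two_ne_zero (α := ℚ)) h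

theorem cb_succ (n : ℕ) : ((n : ℚ) + 1) * cb (n + 1) + n * cb n = -(1 / 2) * cb n := by
  have h : ((n : ℚ) + 1) * (Nat.choose (2 * (n + 1)) (n + 1) : ℚ)
      = 2 * (2 * n + 1) * (Nat.choose (2 * n) n : ℚ) := by
    have := Nat.succ_mul_centralBinom_succ n
    simp only [Nat.centralBinom] at this
    exact_mod_cast this
  have h' : ((n : ℚ) + 1) * cb (n + 1) = -((-1) ^ n * (2 * (2 * n + 1)
      * (Nat.choose (2 * n) n : ℚ))) / (4 ^ n * 4) := by
    rw [← h, cb, pow_succ, pow_succ]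
    ring
  rw [h', cb]
  field_simp
  ring

theorem cb_zero : cb 0 = 1 := by simp [cb]

/-- `ser cb x` is `(1 + x) ^ (-1/2)`. -/
theorem ser_cb_sq_mul {x : R3} (hx : constantCoeff x = 0) : ser cb x ^ 2 * (1 + x) = 1 := by
  have hode : (1 + x) * euler (ser cb x) = -(1 / 2 : ℚ) • (ser cb x * euler x) := by
    have h : ser (fun n => (n + 1) * cb (n + 1)) x + x * ser (fun n => (n + 1) * cb (n + 1)) x
        = -(1 / 2 : ℚ) • ser cb x := by
      rw [mul_ser_succ cb hx, ser_add, smul_ser]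
      simp only [cb_succ]
    rw [euler_ser cb hx, ← smul_mul_assoc, ← h]
    ring
  have hode' : 2 * ((1 + x) * euler (ser cb x)) = -(ser cb x * euler x) := by
    rw [hode, two_mul_eq_smul]
    module
  have h0 : euler (ser cb x ^ 2 * (1 + x)) = 0 := by
    simp only [Derivation.leibniz, Derivation.leibniz_pow, map_add, Derivation.map_one_eq_zero,
      smul_eq_mul, nsmul_eq_mul]
    push_cast
    linear_combination ser cb x * hode'
  rw [eq_C_of_euler_eq_zero h0]
  simp [constantCoeff_ser, cb_zero, hx]

end Binomial

section UniversalIdentity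

theorem constantCoeff_d (i : Fin 3) : constantCoeff (d i) = 0 := constantCoeff_X i

theorem d_ne_zero (i : Fin 3) : d i ≠ 0 := fun h => by
  simpa [d, coeff_index_single_self_X] using congrArg (coeff (Finsupp.single i 1)) h

theorem euler_d (i : Fin 3) : euler (d i) = d i := euler_X i

theorem euler_two : euler (2 : R3) = 0 := euler.map_natCast 2

theorem jet_PsiSub {a b : R3} (ha : constantCoeff a = 0) (hb : constantCoeff b = 0) (N : ℕ) :
    jet N (PsiSub a b) = jet N (∑ p ∈ Finset.range N, ∑ q ∈ Finset.range N,
      (cb p * cb q / (2 * (p + q + 1))) • (a ^ p * b ^ q * (a + 2) ^ (p + q + 1))) :=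
  jet_diagonal_sum₂ _ (fun p q => smul_mem_ordIdeal _ (Ideal.mul_mem_right _ _
    (mul_mem_ordIdeal (pow_mem_ordIdeal ha p) (pow_mem_ordIdeal hb q)))) N

theorem euler_PsiSub_summand (p q : ℕ) :
    euler (d 0 ^ p * d 1 ^ q * (d 0 + 2) ^ (p + q + 1))
        + d 0 ^ p * d 1 ^ q * (d 0 + 2) ^ (p + q + 1)
      = (2 * (p + q + 1) : ℚ) •
        ((1 + d 0) * ((d 0 * (d 0 + 2)) ^ p * (d 1 * (d 0 + 2)) ^ q)) := by
  have hpow : ∀ (i : Fin 3) (n : ℕ), euler (d i ^ n) = n * d i ^ n := by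
    intro i n
    rw [Derivation.leibniz_pow, euler_d, nsmul_eq_mul, smul_eq_mul]
    cases n with
    | zero => simp
    | succ n => rw [Nat.add_sub_cancel, pow_succ]
  have hc : (2 * (p + q + 1) : ℚ) = ((2 * (p + q + 1) : ℕ) : ℚ) := by push_cast; ring
  rw [Derivation.leibniz, Derivation.leibniz, Derivation.leibniz_pow, hpow, hpow, map_add,
    euler_d, euler_two, Nat.add_sub_cancel, hc, Nat.cast_smul_eq_nsmul]
  simp only [smul_eq_mul, nsmul_eq_mul]
  push_cast
  rw [mul_pow, mul_pow]
  ring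

theorem euler_PsiSub_add_PsiSub :
    euler (PsiSub (d 0) (d 1)) + PsiSub (d 0) (d 1)
      = (1 + d 0) * (ser cb (d 0 * (d 0 + 2)) * ser cb (d 1 * (d 0 + 2))) := by
  refine eq_of_jet fun N => ?_
  have hj := jet_PsiSub (constantCoeff_d 0) (constantCoeff_d 1) N
  rw [map_add, jet_euler hj, hj, ← map_add, map_mul, map_mul (jet N) (ser _ _),
    jet_ser cb (by simp [constantCoeff_d]), jet_ser cb (by simp [constantCoeff_d]),
    ← map_mul, ← map_mul, Finset.sum_mul_sum]
  refine congrArg (jet N) ?_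
  simp only [map_sum, ← Finset.sum_add_distrib, Finset.mul_sum]
  refine Finset.sum_congr rfl fun p _ => Finset.sum_congr rfl fun q _ => ?_
  rw [Derivation.map_smul, ← smul_add, euler_PsiSub_summand, smul_smul,
    div_mul_cancel₀ _ (by positivity), smul_mul_smul_comm, mul_smul_comm]

theorem eq_one_of_sq_eq_one {f : R3} (h : f ^ 2 = 1) (h0 : constantCoeff f = 1) : f = 1 := by
  refine (sq_eq_sq_iff_eq_or_eq_neg.1 (h.trans (one_pow 2).symm)).resolve_right fun h' => ?_
  rw [h'] at h0
  norm_num at h0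

theorem euler_PsiSub_add_PsiSub_eq_ser :
    euler (PsiSub (d 0) (d 1)) + PsiSub (d 0) (d 1) = ser cb (d 1 * (d 0 + 2)) := by
  have h : (1 + d 0) * ser cb (d 0 * (d 0 + 2)) = 1 := by
    refine eq_one_of_sq_eq_one ?_ (by simp [constantCoeff_d, constantCoeff_ser, cb_zero])
    linear_combination ser_cb_sq_mul (x := d 0 * (d 0 + 2)) (by simp [constantCoeff_d])
  rw [euler_PsiSub_add_PsiSub, ← mul_assoc, h, one_mul]

theorem eq_zero_of_euler_system {f g A B : R3} (hA : constantCoeff A = 0)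
    (hB : constantCoeff B = 0) (hf : constantCoeff f = 0) (hg : constantCoeff g = 0)
    (hfg : euler f = A * g) (hgf : euler g = B * f) : f = 0 := by
  have step : ∀ {N : ℕ} {f : R3}, constantCoeff f = 0 → euler f ∈ ordIdeal N →
      f ∈ ordIdeal N := by
    intro N f hf h
    refine mem_ordIdeal_iff_coeff.2 fun m hm => ?_
    by_cases hm0 : m = 0
    · rw [hm0, coeff_zero_eq_constantCoeff_apply, hf]
    · have h' := mem_ordIdeal_iff_coeff.1 h m hm
      rw [coeff_euler, mul_eq_zero] at h'
      refine h'.resolve_left ?_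
      rw [mdeg_eq_degree]
      exact_mod_cast mt (Finsupp.degree_eq_zero_iff m).1 hm0
  have key : ∀ N, f ∈ ordIdeal N ∧ g ∈ ordIdeal N := by
    intro N
    induction N with
    | zero => simp [mem_ordIdeal]
    | succ N ih =>
      rw [add_comm]
      exact ⟨step hf (hfg ▸ mul_mem_ordIdeal (mem_ordIdeal_one.2 hA) ih.2),
        step hg (hgf ▸ mul_mem_ordIdeal (mem_ordIdeal_one.2 hB) ih.1)⟩
  exact eq_of_jet fun N => by rw [jet_eq_zero.2 (key N).1, map_zero]

/-- Coefficients of `cosh √y`. -/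
def coshCoeff (n : ℕ) : ℚ := ((2 * n).factorial : ℚ)⁻¹

/-- Coefficients of `sinh √y / √y`. -/
def sinhCoeff (n : ℕ) : ℚ := ((2 * n + 1).factorial : ℚ)⁻¹

theorem coshCoeff_succ (n : ℕ) : ((n : ℚ) + 1) * coshCoeff (n + 1) = 1 / 2 * sinhCoeff n := by
  have h : ((2 * n + 1).factorial : ℚ) ≠ 0 := by positivity
  rw [coshCoeff, sinhCoeff, show 2 * (n + 1) = (2 * n + 1) + 1 by ring, Nat.factorial_succ]
  push_cast
  field_simp
  ring

theorem sinhCoeff_add (n : ℕ) : 2 * (n * sinhCoeff n) + sinhCoeff n = coshCoeff n := by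
  have h : ((2 * n).factorial : ℚ) ≠ 0 := by positivity
  rw [coshCoeff, sinhCoeff, Nat.factorial_succ]
  push_cast
  field_simp

theorem euler_ser_cosh {y : R3} (hy : constantCoeff y = 0) :
    2 * euler (ser coshCoeff y) = ser sinhCoeff y * euler y := by
  rw [euler_ser _ hy]
  simp only [coshCoeff_succ]
  rw [← smul_ser, two_mul_eq_smul, smul_mul_assoc]
  module

theorem mul_ser_sinh {y : R3} (hy : constantCoeff y = 0) :
    2 * (y * ser (fun n => (n + 1) * sinhCoeff (n + 1)) y) + ser sinhCoeff y
      = ser coshCoeff y := by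
  rw [mul_ser_succ _ hy, two_mul_eq_smul, smul_ser, ser_add]
  simp only [sinhCoeff_add]

/-- The identity `cosh (√(uv) Ψ₀) + u sinh (√(uv) Ψ₀) / √(uv) = 1 + u`
in the free variables `u = d₁`, `v = d₂`. -/
theorem cosh_add_sinh_PsiSub :
    ser coshCoeff (PsiSub (d 0) (d 1) ^ 2 * (d 0 * d 1))
      + d 0 * (PsiSub (d 0) (d 1) * ser sinhCoeff (PsiSub (d 0) (d 1) ^ 2 * (d 0 * d 1)))
      = 1 + d 0 := by
  have hP := euler_PsiSub_add_PsiSub_eq_ser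
  have hPsq := ser_cb_sq_mul (x := d 1 * (d 0 + 2)) (by simp [constantCoeff_d])
  have hP0 : constantCoeff (ser cb (d 1 * (d 0 + 2))) = 1 := by
    rw [constantCoeff_ser, cb_zero]
  set Ψ := PsiSub (d 0) (d 1)
  set P := ser cb (d 1 * (d 0 + 2))
  set y := Ψ ^ 2 * (d 0 * d 1) with hy
  have hy0 : constantCoeff y = 0 := by simp [hy, constantCoeff_d]
  have hDy : euler y = 2 * (Ψ * (d 0 * d 1) * P) := by
    rw [hy, ← hP]
    simp only [Derivation.leibniz, Derivation.leibniz_pow, euler_d, smul_eq_mul, nsmul_eq_mul]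
    push_cast
    ring
  have hDC : euler (ser coshCoeff y) = P * (d 0 * d 1) * (Ψ * ser sinhCoeff y) := by
    refine two_mul_left_cancel ?_
    rw [euler_ser_cosh hy0, hDy]
    ring
  have hDS : euler (Ψ * ser sinhCoeff y) = P * ser coshCoeff y - Ψ * ser sinhCoeff y := by
    rw [Derivation.leibniz, euler_ser _ hy0, hDy, smul_eq_mul, smul_eq_mul, ← mul_ser_sinh hy0]
    linear_combination ser sinhCoeff y * hP +
      2 * ser (fun n => (n + 1) * sinhCoeff (n + 1)) y * P * hy.symm
  set Q := P * (1 + d 1 * (d 0 + 2)) with hQ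
  have hPQ : P * Q = 1 := by rw [← hPsq, hQ]; ring
  have hQsq : Q ^ 2 = 1 + d 1 * (d 0 + 2) := by
    linear_combination (1 + d 1 * (d 0 + 2)) * hPsq + (Q + P * (1 + d 1 * (d 0 + 2))) * hQ
  have hDQ : euler Q = P * d 1 * (1 + d 0) := by
    have h := congrArg euler hQsq
    simp only [Derivation.leibniz, Derivation.leibniz_pow, map_add, Derivation.map_one_eq_zero,
      euler_d, euler_two, smul_eq_mul, nsmul_eq_mul] at h
    push_cast at h
    refine two_mul_left_cancel ?_
    linear_combination P * h - 2 * euler Q * hPQ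
  rw [← sub_eq_zero]
  refine eq_zero_of_euler_system (A := P * d 0) (B := P * d 1)
    (g := ser coshCoeff y + d 1 * (Ψ * ser sinhCoeff y) - Q) ?_ ?_ ?_ ?_ ?_ ?_
  · simp [constantCoeff_d]
  · simp [constantCoeff_d]
  · simp [constantCoeff_d, constantCoeff_ser, coshCoeff]
  · simp [constantCoeff_d, constantCoeff_ser, coshCoeff, hQ, hP0]
  · simp only [map_sub, map_add, Derivation.leibniz, Derivation.map_one_eq_zero, euler_d,
      smul_eq_mul] at hDS ⊢
    linear_combination hDC + d 0 * hDS + d 0 * hPQ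
  · simp only [map_sub, map_add, Derivation.leibniz, euler_d, smul_eq_mul] at hDS ⊢
    linear_combination hDC + d 1 * hDS - hDQ

end UniversalIdentity

section Substitution

variable {σ : Fin 3 → R3} (hσ : ∀ i, constantCoeff (σ i) = 0)

theorem jet_subst {N : ℕ} {f g : R3} (h : jet N f = jet N g) :
    jet N (substAlgHom (hasSubst_of_constantCoeff_zero hσ) f)
      = jet N (substAlgHom (hasSubst_of_constantCoeff_zero hσ) g) := by
  rw [jet_eq_jet] at h ⊢
  rw [← map_sub, mem_ordIdeal, substAlgHom_apply]
  refine le_trans ?_ (le_order_subst (hasSubst_of_constantCoeff_zero hσ) _)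
  refine (mem_ordIdeal.1 h).trans (le_mul_of_one_le_left' (le_iInf fun i => ?_))
  exact one_le_order_iff_constCoeff_eq_zero.2 (hσ i)

theorem constantCoeff_substAlgHom {f : R3} (hf : constantCoeff f = 0) :
    constantCoeff (substAlgHom (R := ℚ) (hasSubst_of_constantCoeff_zero hσ) f) = 0 := by
  rw [← mem_ordIdeal_one, ← jet_eq_zero] at hf ⊢
  rw [jet_subst hσ (hf.trans (map_zero _).symm), map_zero, map_zero]

theorem subst_ser (c : ℕ → ℚ) {y : R3} (hy : constantCoeff y = 0) :
    substAlgHom (hasSubst_of_constantCoeff_zero hσ) (ser c y)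
      = ser c (substAlgHom (hasSubst_of_constantCoeff_zero hσ) y) := by
  refine eq_of_jet fun N => ?_
  rw [jet_subst hσ (jet_ser c hy N), jet_ser c (constantCoeff_substAlgHom hσ hy)]
  simp only [map_sum, map_smul, map_pow]

theorem subst_PsiSub :
    substAlgHom (hasSubst_of_constantCoeff_zero hσ) (PsiSub (d 0) (d 1))
      = PsiSub (σ 0) (σ 1) := by
  have hd : ∀ i, substAlgHom (R := ℚ) (hasSubst_of_constantCoeff_zero hσ) (d i) = σ i :=
    fun i => substAlgHom_X _ i
  refine eq_of_jet fun N => ?_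
  rw [jet_subst hσ (jet_PsiSub (constantCoeff_d 0) (constantCoeff_d 1) N),
    jet_PsiSub (hσ 0) (hσ 1)]
  simp only [map_sum, map_smul, map_mul, map_pow, map_add, map_ofNat, hd]

theorem cosh_add_sinh_PsiSub_of_constantCoeff_zero {u v : R3} (hu : constantCoeff u = 0)
    (hv : constantCoeff v = 0) :
    ser coshCoeff (PsiSub u v ^ 2 * (u * v))
      + u * (PsiSub u v * ser sinhCoeff (PsiSub u v ^ 2 * (u * v))) = 1 + u := by
  have hσ : ∀ i, constantCoeff ((![u, v, 0] : Fin 3 → R3) i) = 0 := by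
    intro i
    fin_cases i <;> simp [hu, hv]
  have hd : ∀ i, substAlgHom (R := ℚ) (hasSubst_of_constantCoeff_zero hσ) (d i)
      = (![u, v, 0] : Fin 3 → R3) i := fun i => substAlgHom_X _ i
  have h := congrArg (substAlgHom (hasSubst_of_constantCoeff_zero hσ)) cosh_add_sinh_PsiSub
  have hy : constantCoeff (PsiSub (d 0) (d 1) ^ 2 * (d 0 * d 1)) = 0 := by
    simp [constantCoeff_d]
  simpa only [map_add, map_mul, map_one, map_pow, subst_ser hσ _ hy, subst_PsiSub hσ, hd,
    Matrix.cons_val_zero, Matrix.cons_val_one] using h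

end Substitution

section Solution

theorem constantCoeff_K3 : constantCoeff K3 = 0 := by simp [K3, constantCoeff_d]

theorem Cosh_eq_ser (F : R3) : Cosh F = ser coshCoeff (F ^ 2 * K3) := by
  funext m
  simp only [Cosh, ser, coshCoeff, mul_pow, ← pow_mul]

theorem Sinh_eq_mul_ser (F : R3) : Sinh F = F * ser sinhCoeff (F ^ 2 * K3) := by
  refine eq_of_jet fun N => ?_
  rw [map_mul, jet_ser _ (by simp [constantCoeff_K3]), ← map_mul, Finset.mul_sum]
  refine (jet_diagonal_sum _ (fun n => smul_mem_ordIdeal _ (Ideal.mul_mem_left _ _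
    (pow_mem_ordIdeal constantCoeff_K3 n))) N).trans (congrArg _ ?_)
  refine Finset.sum_congr rfl fun n _ => ?_
  rw [sinhCoeff, mul_smul_comm, mul_pow, ← pow_mul, ← mul_assoc, pow_succ']

theorem Cosh_add_Sinh_FofX (X : R3) :
    Cosh (FofX X) + d 0 * d 2 * Sinh (FofX X) = 1 + d 0 * d 2 * X := by
  have h := cosh_add_sinh_PsiSub_of_constantCoeff_zero (u := d 0 * d 2 * X)
    (v := -(d 1) * (d 0 + d 1 + d 2) * X) (by simp [constantCoeff_d]) (by simp [constantCoeff_d])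
  have hy : FofX X ^ 2 * K3
      = PsiSub (d 0 * d 2 * X) (-(d 1) * (d 0 + d 1 + d 2) * X) ^ 2
        * (d 0 * d 2 * X * (-(d 1) * (d 0 + d 1 + d 2) * X)) := by
    rw [FofX, K3]
    ring
  rw [Cosh_eq_ser, Sinh_eq_mul_ser, hy, ← h, FofX]
  ring

/-- Coefficients of `φ (√y)`. -/
def phiCoeff (n : ℕ) : ℚ := ((4 : ℚ) ^ n * (2 * n + 1).factorial)⁻¹

theorem phi3_eq_ser (g : R3) : phi3 g = ser phiCoeff (g ^ 2) := by
  funext m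
  simp only [phi3, ser, phiCoeff, ← pow_mul]

theorem constantCoeff_phi3 (g : R3) : constantCoeff (phi3 g) = 1 := by
  rw [phi3_eq_ser, constantCoeff_ser]
  simp [phiCoeff]

theorem d_dvd_phi3_sub_phi3 {i : Fin 3} {g h : R3} (hg : constantCoeff g = 0)
    (hh : constantCoeff h = 0) (hd : d i ∣ g - h) : d i ∣ phi3 g - phi3 h := by
  rw [phi3_eq_ser, phi3_eq_ser]
  refine X_dvd_ser_sub_ser _ (by simp [hg]) (by simp [hh]) (hd.trans ?_)
  exact sub_dvd_pow_sub_pow g h 2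

theorem d_mul_d_dvd {i j : Fin 3} (hij : i ≠ j) {f : R3} (hi : d i ∣ f) (hj : d j ∣ f) :
    d i * d j ∣ f := by
  obtain ⟨g, rfl⟩ := hi
  refine mul_dvd_mul_left _ (X_dvd_iff.2 fun m hm => ?_)
  have h := X_dvd_iff.1 hj (Finsupp.single i 1 + m) (by simp [hm, hij])
  rwa [d, X, coeff_add_monomial_mul, one_mul] at h

theorem d_mul_d_dvd_phi3_sub :
    d 0 * d 2 ∣ phi3 (d 1) * phi3 (d 0 + d 1 + d 2) - phi3 (d 0 + d 1) * phi3 (d 1 + d 2) := by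
  refine d_mul_d_dvd (by decide) ?_ ?_
  · have h1 : d 0 ∣ phi3 (d 0 + d 1 + d 2) - phi3 (d 1 + d 2) :=
      d_dvd_phi3_sub_phi3 (by simp [constantCoeff_d]) (by simp [constantCoeff_d]) ⟨1, by ring⟩
    have h2 : d 0 ∣ phi3 (d 1) - phi3 (d 0 + d 1) :=
      d_dvd_phi3_sub_phi3 (by simp [constantCoeff_d]) (by simp [constantCoeff_d]) ⟨-1, by ring⟩
    convert (h1.mul_left (phi3 (d 1))).add (h2.mul_left (phi3 (d 1 + d 2))) using 1
    ring
  · have h1 : d 2 ∣ phi3 (d 0 + d 1 + d 2) - phi3 (d 0 + d 1) :=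
      d_dvd_phi3_sub_phi3 (by simp [constantCoeff_d]) (by simp [constantCoeff_d]) ⟨1, by ring⟩
    have h2 : d 2 ∣ phi3 (d 1) - phi3 (d 1 + d 2) :=
      d_dvd_phi3_sub_phi3 (by simp [constantCoeff_d]) (by simp [constantCoeff_d]) ⟨-1, by ring⟩
    convert (h1.mul_left (phi3 (d 1))).add (h2.mul_left (phi3 (d 0 + d 1))) using 1
    ring

theorem exists_one_add_mul_sq_mul_eq {a A B : R3} (ha : constantCoeff a = 0)
    (hA : constantCoeff A = 1) (hdvd : a ∣ B - A) : ∃ X : R3, (1 + a * X) ^ 2 * A = B := by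
  obtain ⟨Y, hY⟩ := hdvd
  have hA' : A * A⁻¹ = 1 := MvPowerSeries.mul_inv_cancel A (by simp [hA])
  have hz : constantCoeff (a * Y * A⁻¹) = 0 := by simp [ha]
  have hsq := ser_cb_sq_mul hz
  set z := a * Y * A⁻¹ with hz_def
  set S := ser cb z * (1 + z) with hS
  have hS0 : constantCoeff (S + 1) ≠ 0 := by
    simp [hS, constantCoeff_ser, cb_zero, hz]
  have hSsq : S ^ 2 = 1 + z := by
    rw [hS]
    linear_combination (1 + z) * hsq
  have hinv := MvPowerSeries.mul_inv_cancel (S + 1) hS0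
  have hX : 1 + a * (Y * A⁻¹ * (S + 1)⁻¹) = S := by
    linear_combination (S + 1)⁻¹ * hz_def.symm - (S + 1)⁻¹ * hSsq + (S - 1) * hinv
  refine ⟨Y * A⁻¹ * (S + 1)⁻¹, ?_⟩
  rw [hX, hSsq, hz_def]
  linear_combination a * Y * hA' - hY

theorem one_add_mul_injective {a A X X' : R3} (ha : constantCoeff a = 0) (ha' : a ≠ 0)
    (hA : A ≠ 0) (h : (1 + a * X) ^ 2 * A = (1 + a * X') ^ 2 * A) : X = X' := by
  rcases sq_eq_sq_iff_eq_or_eq_neg.1 (mul_right_cancel₀ hA h) with h | h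
  · exact mul_left_cancel₀ ha' (add_left_cancel h)
  · have := congrArg constantCoeff h
    simp [ha] at this
    norm_num at this

end Solution

theorem stmt1 :
    (∃! X : R3, (1 + d 0 * d 2 * X)^2 * phi3 (d 0 + d 1) * phi3 (d 1 + d 2)
        = phi3 (d 1) * phi3 (d 0 + d 1 + d 2)) ∧
    (∀ X : R3, (1 + d 0 * d 2 * X)^2 * phi3 (d 0 + d 1) * phi3 (d 1 + d 2)
        = phi3 (d 1) * phi3 (d 0 + d 1 + d 2) →
      Cosh (FofX X) + d 0 * d 2 * Sinh (FofX X) = 1 + d 0 * d 2 * X ∧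
      (Cosh (FofX X) + d 0 * d 2 * Sinh (FofX X))^2 * phi3 (d 0 + d 1) * phi3 (d 1 + d 2)
        = phi3 (d 1) * phi3 (d 0 + d 1 + d 2)) := by
  have hd : d 0 * d 2 ≠ 0 := mul_ne_zero (d_ne_zero 0) (d_ne_zero 2)
  have hd0 : constantCoeff (d 0 * d 2) = 0 := by simp [constantCoeff_d]
  have hA1 : constantCoeff (phi3 (d 0 + d 1) * phi3 (d 1 + d 2)) = 1 := by
    simp [constantCoeff_phi3]
  have hA : phi3 (d 0 + d 1) * phi3 (d 1 + d 2) ≠ 0 := fun h => by simp [h] at hA1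
  refine ⟨?_, fun X hX => ⟨Cosh_add_Sinh_FofX X, by rw [Cosh_add_Sinh_FofX, hX]⟩⟩
  obtain ⟨X, hX⟩ := exists_one_add_mul_sq_mul_eq hd0 hA1 d_mul_d_dvd_phi3_sub
  refine ⟨X, by simpa only [mul_assoc] using hX, fun X' hX' => ?_⟩
  refine one_add_mul_injective hd0 hd hA (Eq.trans ?_ hX.symm)
  simpa only [mul_assoc] using hX'
end
end

section
/- Equation (21) has a unique solution: there exists exactly one Ψ ∈ ℚ[[u,v]] such that Σ_{n≥0} Ψ^{2n}·(uv)^n/(2n)! + Σ_{n≥0} Ψ^{2n+1}·u^{n+1}·v^n/(2n+1)! = 1 + u. -/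
noncomputable section

abbrev R2 := MvPowerSeries (Fin 2) ℚ

def u : R2 := MvPowerSeries.X 0
def v : R2 := MvPowerSeries.X 1

/-- Σ_{n≥0} Ψ^{2n}·(uv)^n/(2n)!  (coefficientwise finite sum) -/
def S1 (P : R2) : R2 := fun m => ∑ n ∈ Finset.range (mdeg m + 1),
  MvPowerSeries.coeff m ((((2*n).factorial : ℚ))⁻¹ • (P ^ (2*n) * (u * v) ^ n))

/-- Σ_{n≥0} Ψ^{2n+1}·u^{n+1}·v^n/(2n+1)!  (coefficientwise finite sum) -/
def S2 (P : R2) : R2 := fun m => ∑ n ∈ Finset.range (mdeg m + 1),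
  MvPowerSeries.coeff m ((((2*n+1).factorial : ℚ))⁻¹ • (P ^ (2*n+1) * u ^ (n+1) * v ^ n))

/-- equation (21): cosh(Ψ√(uv)) + √(u/v)·sinh(Ψ√(uv)) = 1 + u, expanded -/
def Eq21 (P : R2) : Prop := S1 P + S2 P = 1 + u

open MvPowerSeries

/-- The ideal of power series all of whose monomials have total degree at least `d`. -/
def orderIdeal (d : ℕ) : Ideal R2 where
  carrier := {P | (d : ℕ∞) ≤ P.order}
  add_mem' ha hb := (le_min ha hb).trans min_order_le_add
  zero_mem' := by simp
  smul_mem' c _ hx := (le_trans hx le_add_self).trans le_order_mul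

theorem mem_orderIdeal_iff_le_order {d : ℕ} {P : R2} :
    P ∈ orderIdeal d ↔ (d : ℕ∞) ≤ P.order := Iff.rfl

theorem mem_orderIdeal_iff {d : ℕ} {P : R2} :
    P ∈ orderIdeal d ↔ ∀ m, mdeg m < d → coeff m P = 0 :=
  ⟨fun h _ hm => coeff_of_lt_order (lt_of_lt_of_le (Nat.cast_lt.2 hm) h), fun h => nat_le_order h⟩

theorem orderIdeal_antitone : Antitone orderIdeal :=
  fun _ _ h _ hP => mem_orderIdeal_iff_le_order.2 (le_trans (Nat.cast_le.2 h) hP)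

theorem mul_mem_orderIdeal {c d : ℕ} {P Q : R2} (hP : P ∈ orderIdeal c) (hQ : Q ∈ orderIdeal d) :
    P * Q ∈ orderIdeal (c + d) := by
  rw [mem_orderIdeal_iff_le_order] at *
  push_cast
  exact (add_le_add hP hQ).trans le_order_mul

theorem order_X_eq_one (i : Fin 2) : (X i : R2).order = 1 := by
  rw [X_def, order_monomial_of_ne_zero one_ne_zero]
  simp

theorem v_mem_orderIdeal : v ∈ orderIdeal 1 :=
  mem_orderIdeal_iff_le_order.2 (order_X_eq_one 1).ge

theorem uv_pow_mem_orderIdeal (n : ℕ) : (u * v) ^ n ∈ orderIdeal n := by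
  have huv : u * v ∈ orderIdeal 1 := Ideal.mul_mem_left _ _ v_mem_orderIdeal
  induction n with
  | zero => simp [mem_orderIdeal_iff_le_order]
  | succ n ih => rw [pow_succ]; exact mul_mem_orderIdeal ih huv

theorem u_mul_mem_orderIdeal_iff {d : ℕ} {P : R2} :
    u * P ∈ orderIdeal (d + 1) ↔ P ∈ orderIdeal d := by
  simp only [mem_orderIdeal_iff_le_order, u, order_mul, order_X_eq_one]
  push_cast
  rw [add_comm, ENat.add_le_add_iff_left ENat.one_ne_top]

theorem eq_of_forall_smodEq {P Q : R2} (h : ∀ d, P ≡ Q [SMOD orderIdeal d]) : P = Q := by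
  ext m
  have := mem_orderIdeal_iff.1 (SModEq.sub_mem.1 (h (mdeg m + 1))) m (Nat.lt_succ_self _)
  rwa [map_sub, sub_eq_zero] at this

/-- The coefficientwise sum of a family whose `n`-th member has order at least `n` agrees with
its partial sums in low degrees. -/
theorem coeff_sum_range_eq {F : ℕ → R2} (hF : ∀ n, F n ∈ orderIdeal n) {m : Fin 2 →₀ ℕ} {N : ℕ}
    (hm : mdeg m < N) :
    ∑ n ∈ Finset.range (mdeg m + 1), coeff m (F n) = coeff m (∑ n ∈ Finset.range N, F n) := by
  rw [map_sum]
  refine Finset.sum_subset (Finset.range_subset_range.2 hm) fun n _ hn => ?_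
  exact mem_orderIdeal_iff.1 (hF n) m (not_lt.1 fun h => hn (Finset.mem_range.2 h))

/-- A truncation of the series `G` for which the left-hand side of the equation is
`1 + u * (P + v * G P)`. -/
def truncG (N : ℕ) (P : R2) : R2 :=
  ∑ n ∈ Finset.range N, (u * v) ^ n *
    (C (((2 * (n + 1)).factorial : ℚ)⁻¹) * P ^ (2 * (n + 1)) +
      C (((2 * (n + 1) + 1).factorial : ℚ)⁻¹) * P ^ (2 * (n + 1) + 1) * u)

/-- The truncated fixed-point operator `P ↦ 1 - v * G P`. -/
def fixStep (N : ℕ) (P : R2) : R2 := 1 - v * truncG N P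

theorem S1_add_S2_smodEq (N : ℕ) (P : R2) :
    S1 P + S2 P ≡ 1 + u + u * (P - fixStep N P) [SMOD orderIdeal (N + 1)] := by
  have hsum : (∑ n ∈ Finset.range (N + 1),
      (((2 * n).factorial : ℚ)⁻¹ • (P ^ (2 * n) * (u * v) ^ n))) +
      (∑ n ∈ Finset.range (N + 1),
        (((2 * n + 1).factorial : ℚ)⁻¹ • (P ^ (2 * n + 1) * u ^ (n + 1) * v ^ n))) =
      1 + u + u * (P - fixStep N P) := by
    have hG : u * (v * truncG N P) =
        (∑ n ∈ Finset.range N, (((2 * (n + 1)).factorial : ℚ)⁻¹ •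
          (P ^ (2 * (n + 1)) * (u * v) ^ (n + 1)))) +
        ∑ n ∈ Finset.range N, (((2 * (n + 1) + 1).factorial : ℚ)⁻¹ •
          (P ^ (2 * (n + 1) + 1) * u ^ (n + 1 + 1) * v ^ (n + 1))) := by
      rw [truncG, Finset.mul_sum, Finset.mul_sum, ← Finset.sum_add_distrib]
      refine Finset.sum_congr rfl fun n _ => ?_
      simp only [smul_eq_C_mul]
      ring
    rw [Finset.sum_range_succ', Finset.sum_range_succ', fixStep]
    simp only [mul_zero, Nat.factorial_zero, Nat.cast_one, inv_one, pow_zero, one_smul, zero_add,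
      Nat.factorial_one, pow_one, mul_one]
    linear_combination -hG
  rw [SModEq.sub_mem, mem_orderIdeal_iff]
  intro m hm
  rw [← hsum, map_sub, sub_eq_zero, map_add, map_add]
  congr 1
  · refine coeff_sum_range_eq (fun n => ?_) hm
    rw [smul_eq_C_mul]
    exact Ideal.mul_mem_left _ _ (Ideal.mul_mem_left _ _ (uv_pow_mem_orderIdeal n))
  · refine coeff_sum_range_eq (fun n => ?_) hm
    rw [smul_eq_C_mul, show P ^ (2 * n + 1) * u ^ (n + 1) * v ^ n =
      P ^ (2 * n + 1) * u * (u * v) ^ n by ring]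
    exact Ideal.mul_mem_left _ _ (Ideal.mul_mem_left _ _ (uv_pow_mem_orderIdeal n))

theorem eq21_iff_forall_smodEq_fixStep {P : R2} :
    Eq21 P ↔ ∀ N, P ≡ fixStep N P [SMOD orderIdeal N] := by
  have key (N : ℕ) : 1 + u + u * (P - fixStep N P) ≡ 1 + u [SMOD orderIdeal (N + 1)] ↔
      P ≡ fixStep N P [SMOD orderIdeal N] := by
    rw [SModEq.sub_mem, add_sub_cancel_left, u_mul_mem_orderIdeal_iff, SModEq.sub_mem]
  refine ⟨fun h N => (key N).1 ?_, fun h => eq_of_forall_smodEq fun N => ?_⟩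
  · rw [Eq21] at h
    exact h ▸ (S1_add_S2_smodEq N P).symm
  · exact ((S1_add_S2_smodEq N P).trans ((key N).2 (h N))).mono (orderIdeal_antitone N.le_succ)

theorem fixStep_smodEq_succ {d : ℕ} (N : ℕ) {P Q : R2} (h : P ≡ Q [SMOD orderIdeal d]) :
    fixStep N P ≡ fixStep N Q [SMOD orderIdeal (d + 1)] := by
  have hG : truncG N P ≡ truncG N Q [SMOD orderIdeal d] :=
    SModEq.sum fun n _ => SModEq.rfl.mul <| (SModEq.rfl.mul (h.pow _)).add
      ((SModEq.rfl.mul (h.pow _)).mul SModEq.rfl)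
  rw [SModEq.sub_mem, show fixStep N P - fixStep N Q = -((truncG N P - truncG N Q) * v) by
    simp only [fixStep]; ring]
  exact neg_mem (mul_mem_orderIdeal (SModEq.sub_mem.1 hG) v_mem_orderIdeal)

theorem fixStep_succ_smodEq (N : ℕ) (P : R2) :
    fixStep (N + 1) P ≡ fixStep N P [SMOD orderIdeal N] := by
  rw [SModEq.sub_mem, fixStep, fixStep, truncG, Finset.sum_range_succ, ← truncG,
    sub_sub_sub_cancel_left, ← mul_sub, sub_add_cancel_left]
  exact Ideal.mul_mem_left _ _ (neg_mem (Ideal.mul_mem_right _ _ (uv_pow_mem_orderIdeal N)))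

theorem eq_of_eq21 {P Q : R2} (hP : Eq21 P) (hQ : Eq21 Q) : P = Q := by
  rw [eq21_iff_forall_smodEq_fixStep] at hP hQ
  refine eq_of_forall_smodEq fun d => ?_
  induction d with
  | zero => simp [SModEq.sub_mem, mem_orderIdeal_iff]
  | succ d ih => exact (hP _).trans ((fixStep_smodEq_succ _ ih).trans (hQ _).symm)

/-- Successive approximations to the solution. -/
def approx : ℕ → R2
  | 0 => 0
  | d + 1 => fixStep (d + 1) (approx d)

theorem approx_smodEq_succ (d : ℕ) : approx d ≡ approx (d + 1) [SMOD orderIdeal d] := by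
  induction d with
  | zero => simp [SModEq.sub_mem, mem_orderIdeal_iff]
  | succ d ih => exact (fixStep_smodEq_succ _ ih).trans (fixStep_succ_smodEq _ _).symm

theorem approx_smodEq_of_le {d e : ℕ} (h : d ≤ e) :
    approx d ≡ approx e [SMOD orderIdeal d] := by
  induction e, h using Nat.le_induction with
  | base => exact SModEq.rfl
  | succ e he ih => exact ih.trans ((approx_smodEq_succ e).mono (orderIdeal_antitone he))

/-- The coefficientwise limit of the successive approximations. -/
def solution : R2 := fun m => coeff m (approx (mdeg m + 1))

theorem coeff_solution (m : Fin 2 →₀ ℕ) : coeff m solution = coeff m (approx (mdeg m + 1)) :=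
  coeff_apply solution m

theorem solution_smodEq_approx (d : ℕ) : solution ≡ approx d [SMOD orderIdeal d] := by
  rw [SModEq.sub_mem, mem_orderIdeal_iff]
  intro m hm
  have h : approx (mdeg m + 1) ≡ approx d [SMOD orderIdeal (mdeg m + 1)] := approx_smodEq_of_le hm
  rw [SModEq.sub_mem, mem_orderIdeal_iff] at h
  rw [map_sub, coeff_solution, ← map_sub]
  exact h m (Nat.lt_succ_self _)

theorem eq21_solution : Eq21 solution :=
  eq21_iff_forall_smodEq_fixStep.2 fun d =>
    (((solution_smodEq_approx d).trans (approx_smodEq_succ d)).trans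
      ((fixStep_smodEq_succ (d + 1) (solution_smodEq_approx d).symm).mono
        (orderIdeal_antitone d.le_succ))).trans (fixStep_succ_smodEq d _)

theorem stmt2 : ∃! P : R2, Eq21 P :=
  ⟨solution, eq21_solution, fun _ hP => eq_of_eq21 hP eq21_solution⟩
end
end
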